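/- Suppose the real coefficients {A^{αβ} : α, β = 0,1,2,3} satisfy the null condition. Then there exists a constant C > 0, depending only on the coefficients, such that for all C^∞ functions w₁, w₂ on ℝ × ℝ³ and all (t, x) with x ≠ 0: |A^{αβ}(∂_α w₁)(∂_β w₂)(t,x)| ≤ C ( (Σ_{j=1}^3 |T_j w₁(t,x)|) |∂w₂(t,x)| + |∂w₁(t,x)| (Σ_{j=1}^3 |T_j w₂(t,x)|) ), with summation over repeated indices α, β ∈ {0,1,2,3}. -/

import Mathlib

/-!
At a point with `x ≠ 0` the covector `X = (1, -x/|x|)` is null, and subtracting `(∂_t w) X` from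
the gradient of `w` leaves exactly its good derivatives. Write `B` for the bilinear form with
coefficients `A^{αβ}`. Since `B(X, X) = 0`,
`B(ξ, η) = B(ξ - a X, η) + B(a X, η - b X)` for all scalars `a`, `b`; for the gradients `ξ`, `η`
of `w₁`, `w₂` and `a = ∂_t w₁`, `b = ∂_t w₂`, each term on the right has a factor made of good
derivatives only.
-/

open MeasureTheory Real ENNReal FourierTransform
open scoped ContDiff

noncomputable section

/-- Euclidean space ℝⁿ. -/
abbrev Spc (n : ℕ) := EuclideanSpace ℝ (Fin n)

/-- Space-time ℝ × ℝⁿ. -/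
abbrev STn (n : ℕ) := ℝ × Spc n

variable {n : ℕ}

/-- Directional derivative in the space-time direction `v`. -/
def dirD (v : STn n) (f : STn n → ℝ) : STn n → ℝ := fun p => fderiv ℝ f p v

/-- Time derivative ∂_t. -/
def dtD : (STn n → ℝ) → STn n → ℝ := dirD (1, 0)

/-- Spatial derivative ∂_j. -/
def dxD (j : Fin n) : (STn n → ℝ) → STn n → ℝ := dirD (0, EuclideanSpace.single j 1)

/-- Spatial Laplacian. -/
def lapD (f : STn n → ℝ) : STn n → ℝ := fun p => ∑ j, dxD j (dxD j f) p

/-- d'Alembertian □ = ∂_t² − Δ. -/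
def boxD (f : STn n → ℝ) : STn n → ℝ := fun p => dtD (dtD f) p - lapD f p

/-- Lorentz boost L_j = t ∂_j + x_j ∂_t. -/
def LD (j : Fin n) (f : STn n → ℝ) : STn n → ℝ := fun p => p.1 * dxD j f p + p.2 j * dtD f p

/-- Rotation Ω_{jk} = x_j ∂_k − x_k ∂_j. -/
def RotD (j k : Fin n) (f : STn n → ℝ) : STn n → ℝ := fun p => p.2 j * dxD k f p - p.2 k * dxD j f p

/-- Scaling S = t ∂_t + x·∇. -/
def SD (f : STn n → ℝ) : STn n → ℝ := fun p => p.1 * dtD f p + ∑ j, p.2 j * dxD j f p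

/-- Index type for the Klainerman vector fields. -/
def GIdx (n : ℕ) := Option (Fin n) ⊕ Fin n ⊕ (Fin n × Fin n) ⊕ Unit

instance : Fintype (GIdx n) := by unfold GIdx; infer_instance
instance : DecidableEq (GIdx n) := by unfold GIdx; infer_instance

/-- The Klainerman vector field with index `i`. -/
def Gop : GIdx n → (STn n → ℝ) → STn n → ℝ
  | Sum.inl none => dtD
  | Sum.inl (some j) => dxD j
  | Sum.inr (Sum.inl j) => LD j
  | Sum.inr (Sum.inr (Sum.inl jk)) => RotD jk.1 jk.2
  | Sum.inr (Sum.inr (Sum.inr _)) => SD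

/-- Iterated composition Γ^α along a word of indices. -/
def GwL : List (GIdx n) → (STn n → ℝ) → STn n → ℝ
  | [], f => f
  | a :: l, f => Gop a (GwL l f)

/-- Sum of a quantity over all products of at most `N` Klainerman vector fields. -/
def SumW (N : ℕ) (Φ : (STn n → ℝ) → ℝ≥0∞) (f : STn n → ℝ) : ℝ≥0∞ :=
  ∑ m ∈ Finset.range (N + 1), ∑ w : Fin m → GIdx n, Φ (GwL (List.ofFn w) f)

/-- Pointwise norm of the full space-time gradient ∂u = (∂_t u, ∇_x u). -/
def gradN (f : STn n → ℝ) (p : STn n) : ℝ := Real.sqrt ((dtD f p) ^ 2 + ∑ j, (dxD j f p) ^ 2)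

/-- Fourier transform (in space) of a real valued function. -/
def fourierS (g : Spc n → ℝ) : Spc n → ℂ := 𝓕 (fun x => (g x : ℂ))

/-- ‖ |D|^s g ‖_{L²}, i.e. the L² norm of ξ ↦ |ξ|^s (ℱ g)(ξ). -/
def DsN (s : ℝ) (g : Spc n → ℝ) : ℝ≥0∞ :=
  eLpNorm (fun ξ : Spc n => ‖ξ‖ ^ s * ‖fourierS g ξ‖) 2 volume

/-- The surface measure on the unit sphere of ℝⁿ. -/
def sphM (n : ℕ) : Measure (Metric.sphere (0 : Spc n) 1) := (volume : Measure (Spc n)).toSphere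

/-- The L^q norm of g(r ω) over the unit sphere. -/
def sphN (n : ℕ) (q : ℝ) (g : Spc n → ℝ) (r : ℝ) : ℝ≥0∞ :=
  (∫⁻ o, (‖g (r • (o : Spc n))‖₊ : ℝ≥0∞) ^ q ∂(sphM n)) ^ (1 / q)

/-- The mixed norm ‖g‖_{p,q} = (∫_0^∞ ‖g(r·)‖_{L^q(S^{n-1})}^p r^{n-1} dr)^{1/p}. -/
def mixN (n : ℕ) (p q : ℝ) (g : Spc n → ℝ) : ℝ≥0∞ :=
  (∫⁻ r in Set.Ioi (0 : ℝ), (sphN n q g r) ^ p * ENNReal.ofReal (r ^ (n - 1))) ^ (1 / p)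

/-- A space-time function which is Schwartz in the space variable for each fixed time. -/
def SchwartzInX (v : STn n → ℝ) : Prop :=
  ∀ t : ℝ, ∃ φ : SchwartzMap (Spc n) ℝ, ∀ x, v (t, x) = φ x

/-- The space-time partial derivatives ∂_0 = ∂_t, ∂_j (j = 1,2,3) on ℝ × ℝ³. -/
def pd4 (α : Fin 4) : (STn 3 → ℝ) → STn 3 → ℝ := Fin.cases dtD (fun j => dxD j) α

/-- The null condition for a set of coefficients {A^{αβ}}. -/
def NullCond (A : Fin 4 → Fin 4 → ℝ) : Prop :=
  ∀ X : Fin 4 → ℝ, (X 0) ^ 2 = (X 1) ^ 2 + (X 2) ^ 2 + (X 3) ^ 2 →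
    ∑ α, ∑ β, A α β * X α * X β = 0

/-- The null form A^{αβ} (∂_α v)(∂_β w). -/
def QF (A : Fin 4 → Fin 4 → ℝ) (v w : STn 3 → ℝ) (p : STn 3) : ℝ :=
  ∑ α, ∑ β, A α β * pd4 α v p * pd4 β w p

/-- The good derivative T_j = ∂_j + (x_j/|x|) ∂_t. -/
def TD (j : Fin 3) (f : STn 3 → ℝ) (p : STn 3) : ℝ := dxD j f p + (p.2 j / ‖p.2‖) * dtD f p

end

section Isotropic

variable {𝕜 E F : Type*} [NontriviallyNormedField 𝕜]
  [SeminormedAddCommGroup E] [NormedSpace 𝕜 E] [SeminormedAddCommGroup F] [NormedSpace 𝕜 F]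

lemma norm_apply_apply_le_of_isotropic (B : E →L[𝕜] E →L[𝕜] F) {X : E} (hX : B X X = 0)
    (ξ η : E) (a b : 𝕜) :
    ‖B ξ η‖ ≤ ‖B‖ * (‖ξ - a • X‖ * ‖η‖ + ‖a • X‖ * ‖η - b • X‖) := by
  have split : B ξ η = B (ξ - a • X) η + B (a • X) (η - b • X) := by
    simp only [map_sub, map_smul, sub_apply, smul_apply, hX, smul_zero, sub_zero, sub_add_cancel]
  calc ‖B ξ η‖ ≤ ‖B (ξ - a • X) η‖ + ‖B (a • X) (η - b • X)‖ := split ▸ norm_add_le _ _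
    _ ≤ ‖B‖ * ‖ξ - a • X‖ * ‖η‖ + ‖B‖ * ‖a • X‖ * ‖η - b • X‖ :=
      add_le_add (B.le_opNorm₂ _ _) (B.le_opNorm₂ _ _)
    _ = ‖B‖ * (‖ξ - a • X‖ * ‖η‖ + ‖a • X‖ * ‖η - b • X‖) := by ring

end Isotropic

section SpaceTime

variable {n : ℕ}

/-- A covector on `ℝ × ℝⁿ` is null if it lies on the light cone of the Minkowski metric; the
coordinate `0` is the time component. -/
def IsNullCovector (X : Fin (n + 1) → ℝ) : Prop := X 0 ^ 2 = ∑ j : Fin n, X j.succ ^ 2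

/-- The covector `(1, -x/|x|)`, conormal to the outgoing cones `t - |x| = const`; the good
derivatives are taken in the directions it annihilates. -/
noncomputable def outgoingCovector (x : Spc n) : Fin (n + 1) → ℝ :=
  Fin.cases 1 fun j => -(x j / ‖x‖)

/-- The space-time gradient `(∂_t f, ∂_1 f, …, ∂_n f)` at `p`, the analogue of `pd4` in dimension
`n`. As an element of a function space it carries the supremum norm. -/
noncomputable def spacetimeGrad (f : STn n → ℝ) (p : STn n) : Fin (n + 1) → ℝ :=
  fun α => Fin.cases (motive := fun _ => (STn n → ℝ) → STn n → ℝ) dtD (fun j => dxD j) α f p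

/-- The good derivative `T_j = ∂_j + (x_j/|x|) ∂_t`, the analogue of `TD` in dimension `n`. -/
noncomputable def goodDeriv (j : Fin n) (f : STn n → ℝ) (p : STn n) : ℝ :=
  dxD j f p + (p.2 j / ‖p.2‖) * dtD f p

lemma isNullCovector_outgoingCovector {x : Spc n} (hx : x ≠ 0) :
    IsNullCovector (outgoingCovector x) := by
  have norm_ne : ‖x‖ ^ 2 ≠ 0 := pow_ne_zero 2 (norm_ne_zero_iff.mpr hx)
  calc (1 : ℝ) ^ 2 = (∑ j, x j ^ 2) / ‖x‖ ^ 2 := by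
        rw [← EuclideanSpace.real_norm_sq_eq, div_self norm_ne, one_pow]
    _ = ∑ j, (-(x j / ‖x‖)) ^ 2 := by simp only [Finset.sum_div, neg_sq, div_pow]

lemma norm_outgoingCovector_le_one (x : Spc n) : ‖outgoingCovector x‖ ≤ 1 := by
  refine (pi_norm_le_iff_of_nonneg zero_le_one).mpr (Fin.cases ?_ fun j => ?_)
  · exact norm_one.le
  · calc ‖-(x j / ‖x‖)‖ = ‖x j‖ / ‖x‖ := by rw [norm_neg, norm_div, norm_norm]
      _ ≤ 1 := div_le_one_of_le₀ (PiLp.norm_apply_le x j) (norm_nonneg x)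

lemma norm_spacetimeGrad_le_gradN (f : STn n → ℝ) (p : STn n) :
    ‖spacetimeGrad f p‖ ≤ gradN f p := by
  refine (pi_norm_le_iff_of_nonneg (Real.sqrt_nonneg _)).mpr fun α => Real.abs_le_sqrt ?_
  have sq_eq : dtD f p ^ 2 + ∑ j, dxD j f p ^ 2 = ∑ α, spacetimeGrad f p α ^ 2 :=
    (Fin.sum_univ_succ fun α => spacetimeGrad f p α ^ 2).symm
  rw [sq_eq]
  exact Finset.single_le_sum (f := fun α => spacetimeGrad f p α ^ 2)
    (fun _ _ => sq_nonneg _) (Finset.mem_univ α)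

lemma norm_dtD_smul_outgoingCovector_le (f : STn n → ℝ) (p : STn n) :
    ‖dtD f p • outgoingCovector p.2‖ ≤ gradN f p :=
  calc ‖dtD f p • outgoingCovector p.2‖ ≤ ‖dtD f p‖ := by
        rw [norm_smul]
        exact mul_le_of_le_one_right (norm_nonneg _) (norm_outgoingCovector_le_one p.2)
    _ ≤ ‖spacetimeGrad f p‖ := norm_le_pi_norm (spacetimeGrad f p) 0
    _ ≤ gradN f p := norm_spacetimeGrad_le_gradN f p

lemma norm_spacetimeGrad_sub_le_sum_goodDeriv (f : STn n → ℝ) (p : STn n) :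
    ‖spacetimeGrad f p - dtD f p • outgoingCovector p.2‖ ≤ ∑ j, |goodDeriv j f p| := by
  have sum_nonneg : 0 ≤ ∑ j, |goodDeriv j f p| := Finset.sum_nonneg fun _ _ => abs_nonneg _
  refine (pi_norm_le_iff_of_nonneg sum_nonneg).mpr (Fin.cases ?_ fun j => ?_)
  · simpa [spacetimeGrad, outgoingCovector] using sum_nonneg
  · have component : (spacetimeGrad f p - dtD f p • outgoingCovector p.2) j.succ
        = goodDeriv j f p := by
      simp only [spacetimeGrad, outgoingCovector, goodDeriv, Pi.sub_apply, Pi.smul_apply,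
        Fin.cases_succ, smul_eq_mul]
      ring
    rw [component, Real.norm_eq_abs]
    exact Finset.single_le_sum (f := fun j => |goodDeriv j f p|)
      (fun _ _ => abs_nonneg _) (Finset.mem_univ j)

theorem null_form_good_derivatives_general (A : Fin (n + 1) → Fin (n + 1) → ℝ)
    (hA : ∀ X, IsNullCovector X → ∑ α, ∑ β, A α β * X α * X β = 0) :
    ∃ C > (0 : ℝ), ∀ (w₁ w₂ : STn n → ℝ) (z : STn n),
      DifferentiableAt ℝ w₁ z → DifferentiableAt ℝ w₂ z → z.2 ≠ 0 →
        |∑ α, ∑ β, A α β * spacetimeGrad w₁ z α * spacetimeGrad w₂ z β| ≤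
          C * ((∑ j, |goodDeriv j w₁ z|) * gradN w₂ z +
            gradN w₁ z * ∑ j, |goodDeriv j w₂ z|) := by
  let B := (Matrix.toBilin' A).toContinuousBilinearMap
  have B_apply (ξ η : Fin (n + 1) → ℝ) : B ξ η = ∑ α, ∑ β, A α β * ξ α * η β := by
    simp only [mul_comm (A _ _)]
    exact Matrix.toBilin'_apply A ξ η
  refine ⟨‖B‖ + 1, by positivity, fun w₁ w₂ z _ _ hz => ?_⟩
  have isotropic : B (outgoingCovector z.2) (outgoingCovector z.2) = 0 :=
    (B_apply _ _).trans (hA _ (isNullCovector_outgoingCovector hz))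
  have gradN_nonneg : 0 ≤ gradN w₁ z := Real.sqrt_nonneg _
  rw [← B_apply, ← Real.norm_eq_abs]
  refine (norm_apply_apply_le_of_isotropic B isotropic _ _ (dtD w₁ z) (dtD w₂ z)).trans ?_
  gcongr
  · exact le_add_of_nonneg_right zero_le_one
  · exact norm_spacetimeGrad_sub_le_sum_goodDeriv w₁ z
  · exact norm_spacetimeGrad_le_gradN w₂ z
  · exact norm_dtD_smul_outgoingCovector_le w₁ z
  · exact norm_spacetimeGrad_sub_le_sum_goodDeriv w₂ z

end SpaceTime

/-- Pointwise estimate for null forms in terms of the good derivatives T_j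
(Lemma B.2). -/
theorem null_form_good_derivatives (A : Fin 4 → Fin 4 → ℝ) (hA : NullCond A) :
    ∃ C > (0 : ℝ), ∀ w₁ w₂ : STn 3 → ℝ, ContDiff ℝ ∞ w₁ → ContDiff ℝ ∞ w₂ →
      ∀ z : STn 3, z.2 ≠ 0 →
        |QF A w₁ w₂ z| ≤
          C * ((∑ j, |TD j w₁ z|) * gradN w₂ z + gradN w₁ z * (∑ j, |TD j w₂ z|)) := by
  obtain ⟨C, hC, bound⟩ := null_form_good_derivatives_general A
    fun X hX => hA X (hX.trans (Fin.sum_univ_three _))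
  exact ⟨C, hC, fun w₁ w₂ h₁ h₂ z => bound w₁ w₂ z
    (h₁.contDiffAt.differentiableAt (by simp)) (h₂.contDiffAt.differentiableAt (by simp))⟩
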